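/- arXiv:2605.12341 — 3 statements merged into one kernel-verified Lean document; each statement's English description precedes it below -/
import Mathlib

section
/- Let μ be a probability measure on ℝ and let X_1, …, X_{n+1} be independent random variables each with law μ (formally, the coordinate maps on the product space (ℝ^{n+1}, μ^{⊗(n+1)})). For 1 ≤ k ≤ n, let X_{(k)} denote the k-th smallest value among X_1, …, X_n. Then the probability of the event {X_{n+1} ≤ X_{(k)}} is at least k/(n+1). -/
open MeasureTheory

/-- The `k`-th smallest value (0-indexed) among `t 0, …, t (n-1)`. -/
noncomputable def orderStat {n : ℕ} (t : Fin n → ℝ) (k : Fin n) : ℝ :=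
  (t ∘ Tuple.sort t) k

/-- the event that coordinate `i` has fewer than `k` coordinates strictly below it -/
def lowRank (n k : ℕ) (i : Fin (n + 1)) : Set (Fin (n + 1) → ℝ) :=
  {ω | (Finset.univ.filter (fun j => ω j < ω i)).card < k}

theorem lowRank_measurable (n k : ℕ) (i : Fin (n + 1)) : MeasurableSet (lowRank n k i) := by
  have h : Measurable (fun ω : Fin (n + 1) → ℝ =>
      ∑ j : Fin (n + 1), if ω j < ω i then (1 : ℕ) else 0) := by
    refine Finset.measurable_sum _ fun j _ => ?_
    exact Measurable.ite (measurableSet_lt (measurable_pi_apply j) (measurable_pi_apply i))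
      measurable_const measurable_const
  have h2 := h (measurableSet_Iio (a := k))
  convert h2 using 1
  ext ω
  simp [lowRank]

theorem lowRank_measure (n k : ℕ) (μ : Measure ℝ) [IsProbabilityMeasure μ] (i : Fin (n + 1)) :
    Measure.pi (fun _ : Fin (n + 1) => μ) (lowRank n k i) =
      Measure.pi (fun _ : Fin (n + 1) => μ) (lowRank n k (Fin.last n)) := by
  set e : Equiv.Perm (Fin (n + 1)) := Equiv.swap i (Fin.last n) with he
  have hp := measurePreserving_piCongrLeft (fun _ : Fin (n + 1) => μ) e
  rw [← hp.measure_preimage (lowRank_measurable n k i).nullMeasurableSet]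
  congr 1
  ext ω
  have key : ∀ j, MeasurableEquiv.piCongrLeft (fun _ : Fin (n + 1) => ℝ) e ω j = ω (e.symm j) := by
    intro j
    obtain ⟨j, rfl⟩ := e.surjective j
    rw [Equiv.symm_apply_apply]
    exact Equiv.piCongrLeft_apply_apply (fun _ : Fin (n + 1) => ℝ) e ω j
  have hi : e.symm i = Fin.last n := by simp [he]
  simp only [lowRank, Set.mem_preimage, Set.mem_ofPred_eq, key, hi]
  rw [Finset.card_bijective e.symm e.symm.bijective (t := Finset.univ.filter
    (fun j => ω j < ω (Fin.last n))) (by simp)]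

theorem lowRank_count (n k : ℕ) (hkn : k ≤ n) (ω : Fin (n + 1) → ℝ) :
    (k : ENNReal) ≤ ∑ i, (lowRank n k i).indicator (fun _ => (1 : ENNReal)) ω := by
  classical
  set σ := Tuple.sort ω
  have hm : Monotone (ω ∘ σ) := Tuple.monotone_sort ω
  have h1 : ∀ m : Fin (n + 1), m.val < k → ω ∈ lowRank n k (σ m) := by
    intro m hmk
    have : (Finset.univ.filter (fun j => ω j < ω (σ m))).card ≤ (Finset.Iio m).card := by
      refine Finset.card_le_card_of_injOn σ.symm ?_ σ.symm.injective.injOn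
      intro j hj
      simp only [Finset.coe_filter, Finset.mem_univ, true_and, Set.mem_ofPred_eq] at hj
      simp only [Finset.coe_Iio, Set.mem_Iio]
      by_contra hc
      have := hm (not_lt.mp hc)
      simp at this
      linarith
    simp only [Fin.card_Iio] at this
    exact lt_of_le_of_lt this hmk
  rw [← Equiv.sum_comp σ]
  calc (k : ENNReal) = ∑ m : Fin (n + 1), if m.val < k then (1 : ENNReal) else 0 := by
        rw [Fin.sum_univ_eq_sum_range (fun m => if m < k then (1 : ENNReal) else 0),
          ← Finset.sum_filter]
        have : (Finset.range (n + 1)).filter (fun m => m < k) = Finset.range k := by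
          ext a; simp; omega
        simp [this]
    _ ≤ _ := by
        refine Finset.sum_le_sum fun m _ => ?_
        split_ifs with h
        · simp [Set.indicator_of_mem (h1 m h)]
        · exact zero_le

theorem lowRank_subset (n k : ℕ) (hk1 : 1 ≤ k) (hlt : k - 1 < n) :
    lowRank n k (Fin.last n) ⊆
      {ω | ω (Fin.last n) ≤ orderStat (fun i : Fin n => ω i.castSucc) ⟨k - 1, hlt⟩} := by
  intro ω hω
  simp only [lowRank, Set.mem_ofPred_eq] at hω ⊢
  by_contra hc
  rw [not_le] at hc
  set t : Fin n → ℝ := fun i => ω i.castSucc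
  have hm : Monotone (t ∘ Tuple.sort t) := Tuple.monotone_sort t
  have : (Finset.Iic (⟨k - 1, hlt⟩ : Fin n)).card ≤
      (Finset.univ.filter (fun j => ω j < ω (Fin.last n))).card := by
    refine Finset.card_le_card_of_injOn (fun m => (Tuple.sort t m).castSucc) ?_ ?_
    · intro m hmm
      simp only [Finset.coe_Iic, Set.mem_Iic] at hmm
      simp only [Finset.coe_filter, Finset.mem_univ, true_and, Set.mem_ofPred_eq]
      exact lt_of_le_of_lt (hm hmm) hc
    · exact ((Fin.castSucc_injective n).comp (Tuple.sort t).injective).injOn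
  rw [Fin.card_Iic] at this
  simp only at this
  omega

/-- split conformal coverage: for i.i.d. `X_1, …, X_{n+1}` with law `μ`
(coordinates of the product measure), the probability that `X_{n+1}` does not exceed the
`k`-th smallest of `X_1, …, X_n` is at least `k/(n+1)`. -/
theorem stmt3 (n : ℕ) (hn : 0 < n) (μ : Measure ℝ) [IsProbabilityMeasure μ]
    (k : ℕ) (hk1 : 1 ≤ k) (hkn : k ≤ n) :
    ENNReal.ofReal ((k : ℝ) / (n + 1)) ≤
      Measure.pi (fun _ : Fin (n + 1) => μ)
        {ω | ω (Fin.last n) ≤ orderStat (fun i : Fin n => ω i.castSucc) ⟨k - 1, by omega⟩} := by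
  refine le_trans ?_ (measure_mono (lowRank_subset n k hk1 _))
  set P := Measure.pi (fun _ : Fin (n + 1) => μ) with hP
  have h : (k : ENNReal) ≤ (n + 1 : ℕ) * P (lowRank n k (Fin.last n)) := by
    calc (k : ENNReal) = ∫⁻ _, (k : ENNReal) ∂P := by simp
      _ ≤ ∫⁻ ω, ∑ i, (lowRank n k i).indicator (fun _ => (1 : ENNReal)) ω ∂P :=
        lintegral_mono (lowRank_count n k hkn)
      _ = ∑ i, P (lowRank n k i) := by
        rw [lintegral_finsetSum _ fun i _ => measurable_const.indicator (lowRank_measurable n k i)]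
        exact Finset.sum_congr rfl fun i _ => lintegral_indicator_one (lowRank_measurable n k i)
      _ = _ := by
        rw [Finset.sum_congr rfl fun i _ => lowRank_measure n k μ i]
        simp [hP]
  rw [ENNReal.ofReal_div_of_pos (by positivity), ENNReal.ofReal_natCast]
  have h3 : ENNReal.ofReal ((n : ℝ) + 1) = ((n + 1 : ℕ) : ENNReal) := by
    rw [← ENNReal.ofReal_natCast]; push_cast; rfl
  rw [h3]
  exact ENNReal.div_le_of_le_mul' h
end

section
/- Let n, d, ρ be positive integers and let v^{(1)}, …, v^{(n)} ∈ ℝ^d be vectors such that for each coordinate j ∈ {1,…,d} the values |v_j^{(1)}|, …, |v_j^{(n)}| are pairwise distinct. Let M_0 ⊆ M_1 ⊆ … ⊆ M_ρ ⊆ {1,…,n} be any increasing family of index sets with M_0 = ∅ such that, for every stage k < ρ and every coordinate j, the index attaining max_{m ∉ M_k} |v_j^{(m)}| belongs to M_{k+1} (assume all complements encountered are nonempty). Then for every coordinate j, the set of indices of the ρ largest values among |v_j^{(1)}|, …, |v_j^{(n)}| is contained in M_ρ. Consequently, for every j, max_{m ∉ M_ρ} |v_j^{(m)}| is at most the (ρ+1)-th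 largest value among |v_j^{(1)}|, …, |v_j^{(n)}|, and the axis-aligned box centered at any point with half-widths q*_j = max_{m ∉ M_ρ} |v_j^{(m)}| is contained in the box with half-widths q̃_j equal to those (ρ+1)-th largest values. -/
/-- The `k`-th smallest value (0-indexed) among `t 0, …, t (n-1)`; junk value `0` when
`k ≥ n`. -/
noncomputable def orderStatN {n : ℕ} (t : Fin n → ℝ) (k : ℕ) : ℝ :=
  if h : k < n then (t ∘ Tuple.sort t) ⟨k, h⟩ else 0

/-- if the removal sets `M_k` at each stage absorb, for every coordinate
`j`, the index attaining `max_{m ∉ M_k} |v_j^{(m)}|`, then after `ρ` stages `M_ρ` contains,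
for every coordinate, the indices of the `ρ` largest absolute values; hence every retained
residual is dominated by the `(ρ+1)`-th largest value (the `(n−ρ)`-th smallest, 0-indexed
`n−ρ−1`), and the corresponding axis-aligned box is contained in the Bonferroni box. -/
theorem stmt12 (n d ρ : ℕ) (hn : 0 < n) (hd : 0 < d) (hρ : 0 < ρ)
    (v : Fin n → Fin d → ℝ)
    (hdist : ∀ j : Fin d, Function.Injective fun m => |v m j|)
    (M : ℕ → Finset (Fin n))
    (hmono : ∀ k, M k ⊆ M (k + 1))
    (hM0 : M 0 = ∅)
    (hcompl : ∀ k ≤ ρ, ((M k)ᶜ : Finset (Fin n)).Nonempty)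
    (hstep : ∀ k < ρ, ∀ j : Fin d, ∀ m ∉ M k,
        (∀ m' ∉ M k, |v m' j| ≤ |v m j|) → m ∈ M (k + 1)) :
    (∀ j : Fin d, ∀ m : Fin n,
        (Finset.univ.filter fun m' => |v m j| < |v m' j|).card < ρ → m ∈ M ρ) ∧
    (∀ j : Fin d, ∀ m ∉ M ρ, |v m j| ≤ orderStatN (fun m' => |v m' j|) (n - ρ - 1)) ∧
    (∀ c : Fin d → ℝ,
        {y : Fin d → ℝ | ∀ j, |y j - c j| ≤
            ((M ρ)ᶜ).sup' (hcompl ρ le_rfl) fun m => |v m j|} ⊆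
          {y : Fin d → ℝ | ∀ j, |y j - c j| ≤ orderStatN (fun m' => |v m' j|) (n - ρ - 1)}) := by
  have key : ∀ k ≤ ρ, ∀ j : Fin d, ∀ m : Fin n,
      (Finset.univ.filter fun m' => |v m j| < |v m' j|).card < k → m ∈ M k := by
    intro k
    induction k with
    | zero => intro _ j m h; omega
    | succ k ih =>
      intro hk j m h
      by_cases hm : m ∈ M k
      · exact hmono k hm
      · refine hstep k (by omega) j m hm ?_
        intro m' hm'
        by_contra hlt
        push Not at hlt
        apply hm'
        refine ih (by omega) j m' ?_
        have hss : (Finset.univ.filter fun m'' => |v m' j| < |v m'' j|) ⊂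
            (Finset.univ.filter fun m'' => |v m j| < |v m'' j|) := by
          rw [Finset.ssubset_iff_of_subset]
          · exact ⟨m', by simpa using hlt, by simp⟩
          · intro x hx
            simp only [Finset.mem_filter, Finset.mem_univ, true_and] at hx ⊢
            exact hlt.trans hx
        have := Finset.card_lt_card hss
        omega
  have key2 : ∀ j : Fin d, ∀ m ∉ M ρ,
      |v m j| ≤ orderStatN (fun m' => |v m' j|) (n - ρ - 1) := by
    intro j m hm
    by_contra hlt
    push Not at hlt
    apply hm
    refine key ρ le_rfl j m ?_
    have hkn : n - ρ - 1 < n := by omega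
    rw [orderStatN, dif_pos hkn] at hlt
    have hmon := Tuple.monotone_sort (fun m' => |v m' j|)
    generalize Tuple.sort (fun m' => |v m' j|) = σ at hlt hmon
    have h1 : (⟨n - ρ - 1, hkn⟩ : Fin n) < σ.symm m := by
      by_contra hle
      have := hmon (not_lt.mp hle)
      simp only [Function.comp_apply, Equiv.apply_symm_apply] at this hlt
      exact absurd hlt (not_lt.mpr this)
    have hcard : (Finset.univ.filter fun m' => |v m j| < |v m' j|).card
        ≤ (Finset.Ioi (σ.symm m)).card := by
      refine Finset.card_le_card_of_injOn σ.symm ?_ σ.symm.injective.injOn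
      intro x hx
      simp only [Finset.coe_filter, Finset.mem_univ, true_and, Set.mem_setOf_eq] at hx
      simp only [Finset.coe_Ioi, Set.mem_Ioi]
      by_contra hle
      have := hmon (not_lt.mp hle)
      simp only [Function.comp_apply, Equiv.apply_symm_apply] at this
      exact absurd hx (not_lt.mpr this)
    rw [Fin.card_Ioi] at hcard
    rw [Fin.lt_def] at h1
    simp only at h1
    omega
  refine ⟨key ρ le_rfl, key2, ?_⟩
  intro c y hy j
  refine (hy j).trans (Finset.sup'_le _ _ ?_)
  intro m hm
  exact key2 j m (Finset.mem_compl.mp hm)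
end

section
/- Let ε ∈ (0,1) and let n be a positive integer with ε(n+1) ≥ 1; set ρ = ⌊ε(n+1)⌋ − 1. Let μ be a probability measure on ℝ and X_1, …, X_{n+1} independent random variables each with law μ, and let X_{(n−ρ)} denote the (n−ρ)-th smallest value among X_1, …, X_n. Then P(X_{n+1} ≤ X_{(n−ρ)}) ≥ 1 − ε. -/
open MeasureTheory

/-- Event that at least `m` coordinates lie strictly below coordinate `j`. -/
def badEvent (N m : ℕ) (j : Fin N) : Set (Fin N → ℝ) :=
  {ω | m ≤ (Finset.univ.filter (fun i => ω i < ω j)).card}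

lemma badEvent_meas (N m : ℕ) (j : Fin N) : MeasurableSet (badEvent N m j) := by
  have h : Measurable (fun ω : Fin N → ℝ => ∑ i, if ω i < ω j then (1 : ℕ) else 0) := by
    refine Finset.measurable_sum _ fun i _ => ?_
    refine Measurable.ite ?_ measurable_const measurable_const
    exact measurableSet_lt (measurable_pi_apply i) (measurable_pi_apply j)
  have : badEvent N m j = (fun ω : Fin N → ℝ => ∑ i, if ω i < ω j then (1 : ℕ) else 0) ⁻¹' (Set.Ici m) := by
    ext ω
    simp [badEvent]
  rw [this]
  exact h measurableSet_Ici

lemma badEvent_count (N m : ℕ) (ω : Fin N → ℝ) :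
    (Finset.univ.filter (fun j => m ≤ (Finset.univ.filter (fun i => ω i < ω j)).card)).card
      ≤ N - m := by
  set B := Finset.univ.filter (fun j => m ≤ (Finset.univ.filter (fun i => ω i < ω j)).card) with hB
  rcases B.eq_empty_or_nonempty with h | h
  · simp [h]
  · obtain ⟨j, hj, hmin⟩ := B.exists_min_image ω h
    have hd : Disjoint B (Finset.univ.filter (fun i => ω i < ω j)) := by
      rw [Finset.disjoint_left]
      intro i hi hi'
      have := hmin i hi
      simp at hi'
      linarith
    have h2 := Finset.card_union_of_disjoint hd
    have h3 := Finset.card_le_univ (B ∪ (Finset.univ.filter (fun i => ω i < ω j)))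
    have h4 : m ≤ (Finset.univ.filter (fun i => ω i < ω j)).card := (Finset.mem_filter.1 hj).2
    simp only [Fintype.card_fin] at h3
    omega

lemma badEvent_exch (N m : ℕ) (μ : Measure ℝ) [IsProbabilityMeasure μ] (j l : Fin N) :
    Measure.pi (fun _ : Fin N => μ) (badEvent N m j)
      = Measure.pi (fun _ : Fin N => μ) (badEvent N m l) := by
  have h := measurePreserving_piCongrLeft (fun _ : Fin N => μ) (Equiv.swap j l)
  rw [← h.measure_preimage (badEvent_meas N m l).nullMeasurableSet]
  congr 1
  ext ω
  have key : ∀ i, (MeasurableEquiv.piCongrLeft (fun _ : Fin N => ℝ) (Equiv.swap j l)) ω i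
      = ω (Equiv.swap j l i) := by
    intro i
    have := Equiv.piCongrLeft_apply_apply (fun _ : Fin N => ℝ) (Equiv.swap j l) ω
      (Equiv.swap j l i)
    rw [Equiv.swap_apply_self] at this
    exact this
  simp only [badEvent, Set.mem_preimage, Set.mem_ofPred_eq, key, Equiv.swap_apply_right]
  have : (Finset.univ.filter (fun i => ω i < ω j)).card
      = (Finset.univ.filter (fun i => ω (Equiv.swap j l i) < ω j)).card := by
    simp only [Finset.card_filter]
    exact (Equiv.sum_comp (Equiv.swap j l) (fun i => if ω i < ω j then 1 else 0)).symm
  rw [this]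

lemma badEvent_prob (N m : ℕ) (μ : Measure ℝ) [IsProbabilityMeasure μ] (l : Fin N) :
    (N : ENNReal) * Measure.pi (fun _ : Fin N => μ) (badEvent N m l) ≤ ((N - m : ℕ) : ENNReal) := by
  calc (N : ENNReal) * Measure.pi (fun _ : Fin N => μ) (badEvent N m l)
      = ∑ j, Measure.pi (fun _ : Fin N => μ) (badEvent N m j) := by
        rw [Finset.sum_congr rfl (fun j _ => badEvent_exch N m μ j l)]
        simp
    _ = ∑ j, ∫⁻ ω, (badEvent N m j).indicator 1 ω ∂(Measure.pi (fun _ : Fin N => μ)) := by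
        refine Finset.sum_congr rfl fun j _ => ?_
        rw [lintegral_indicator_one (badEvent_meas N m j)]
    _ = ∫⁻ ω, ∑ j, (badEvent N m j).indicator 1 ω ∂(Measure.pi (fun _ : Fin N => μ)) := by
        rw [lintegral_finsetSum]
        intro j _
        exact measurable_one.indicator (badEvent_meas N m j)
    _ ≤ ∫⁻ ω, ((N - m : ℕ) : ENNReal) ∂(Measure.pi (fun _ : Fin N => μ)) := by
        refine lintegral_mono fun ω => ?_
        have h := badEvent_count N m ω
        have h' : ∑ j, (badEvent N m j).indicator (1 : (Fin N → ℝ) → ENNReal) ω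
          = ((Finset.univ.filter
            (fun j => m ≤ (Finset.univ.filter (fun i => ω i < ω j)).card)).card : ENNReal) := by
          rw [Finset.card_filter]
          push_cast
          refine Finset.sum_congr rfl fun j _ => ?_
          simp [Set.indicator_apply, badEvent]
        show ∑ j, (badEvent N m j).indicator (1 : (Fin N → ℝ) → ENNReal) ω ≤ _
        rw [h']
        exact_mod_cast h
    _ = _ := by simp

lemma orderStat_lt_card {n : ℕ} (t : Fin n → ℝ) (k : Fin n) (x : ℝ) (h : orderStat t k < x) :
    (k : ℕ) + 1 ≤ (Finset.univ.filter (fun i => t i < x)).card := by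
  have : ((Finset.Iic k).map (Tuple.sort t).toEmbedding) ⊆
      Finset.univ.filter (fun i => t i < x) := by
    intro i hi
    simp only [Finset.mem_map, Finset.mem_Iic] at hi
    obtain ⟨a, ha, rfl⟩ := hi
    have := Tuple.monotone_sort t ha
    simp only [Finset.mem_filter, Finset.mem_univ, true_and]
    exact lt_of_le_of_lt this h
  have := Finset.card_le_card this
  simpa using this

/-- marginal coverage of split conformal prediction: with outlier budget
`ρ = ⌊ε(n+1)⌋ − 1` and threshold the `(n−ρ)`-th smallest of the i.i.d. calibration scores
`X_1, …, X_n`, a fresh sample `X_{n+1}` is covered with probability at least `1 − ε`. -/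
theorem stmt17 (ε : ℝ) (hε : ε ∈ Set.Ioo (0 : ℝ) 1) (n : ℕ) (hn : 0 < n)
    (h1 : 1 ≤ ε * (n + 1)) (μ : Measure ℝ) [IsProbabilityMeasure μ] :
    ENNReal.ofReal (1 - ε) ≤
      Measure.pi (fun _ : Fin (n + 1) => μ)
        {ω | ω (Fin.last n) ≤ orderStat (fun i : Fin n => ω i.castSucc)
            ⟨n - (⌊ε * (n + 1)⌋₊ - 1) - 1, by omega⟩} := by
  obtain ⟨h0, hlt⟩ := hε
  have hr1 : 1 ≤ ⌊ε * (n + 1)⌋₊ := Nat.one_le_floor_iff _ |>.2 h1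
  have hrle : (⌊ε * (n + 1)⌋₊ : ℝ) ≤ ε * (n + 1) := Nat.floor_le (by positivity)
  have hrn : ⌊ε * (n + 1)⌋₊ ≤ n := by
    have : (⌊ε * (n + 1)⌋₊ : ℝ) < n + 1 := by nlinarith
    have : ⌊ε * (n + 1)⌋₊ < n + 1 := by exact_mod_cast this
    omega
  set r := ⌊ε * (n + 1)⌋₊ with hr
  have hsub : (badEvent (n + 1) (n - r + 1) (Fin.last n))ᶜ ⊆
      {ω | ω (Fin.last n) ≤ orderStat (fun i : Fin n => ω i.castSucc)
            ⟨n - (r - 1) - 1, by omega⟩} := by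
    intro ω hω
    by_contra hc
    apply hω
    simp only [Set.mem_ofPred_eq, not_le] at hc
    have h := orderStat_lt_card _ _ _ hc
    simp only at h
    have h2 : (Finset.univ.filter (fun i : Fin n => ω i.castSucc < ω (Fin.last n))).card
        ≤ (Finset.univ.filter (fun i => ω i < ω (Fin.last n))).card := by
      simp only [Finset.card_filter, Fin.sum_univ_castSucc]
      omega
    show n - r + 1 ≤ _
    omega
  refine le_trans ?_ (measure_mono hsub)
  rw [prob_compl_eq_one_sub (badEvent_meas _ _ _)]
  have hp := badEvent_prob (n + 1) (n - r + 1) μ (Fin.last n)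
  rw [show n + 1 - (n - r + 1) = r by omega] at hp
  rw [ENNReal.ofReal_sub _ h0.le, ENNReal.ofReal_one]
  refine tsub_le_tsub_left ?_ _
  set p := Measure.pi (fun _ : Fin (n + 1) => μ) (badEvent (n + 1) (n - r + 1) (Fin.last n))
    with hpdef
  have hpt : p ≠ ⊤ := measure_ne_top _ _
  rw [ENNReal.le_ofReal_iff_toReal_le hpt h0.le]
  have hp' := ENNReal.toReal_mono (by simp) hp
  rw [ENNReal.toReal_mul] at hp'
  simp only [ENNReal.toReal_natCast] at hp'
  push_cast at hp'
  have hpos : (0 : ℝ) < n + 1 := by positivity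
  have : ((n : ℝ) + 1) * p.toReal ≤ ((n : ℝ) + 1) * ε := by linarith
  exact le_of_mul_le_mul_left this hpos
end
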